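/- arXiv:2304.04323 — 3 statements merged into one kernel-verified Lean document; each statement's English description precedes it below -/
import Mathlib

section
/- If n^(1), n^(2), n^(3) ∈ ℝ² are three pairwise distinct unit vectors, then the three vectors w^(i) := (1, −n^(i)_1, −n^(i)_2)^T ∈ ℝ³, i = 1, 2, 3, are linearly independent. -/
open Matrix

/-- If `n⁽¹⁾, n⁽²⁾, n⁽³⁾ ∈ ℝ²` are three pairwise distinct unit vectors, then
the vectors `w⁽ⁱ⁾ = (1, -n⁽ⁱ⁾₁, -n⁽ⁱ⁾₂)ᵀ ∈ ℝ³` are linearly independent. -/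
theorem w_vectors_linearIndependent (n : Fin 3 → ℝ × ℝ)
    (hn : ∀ i, (n i).1 ^ 2 + (n i).2 ^ 2 = 1)
    (hdist : ∀ i j, i ≠ j → n i ≠ n j) :
    LinearIndependent ℝ (fun i : Fin 3 => (![1, -(n i).1, -(n i).2] : Fin 3 → ℝ)) := by
  have pos : ∀ i j, i ≠ j → 1 - (n i).1 * (n j).1 - (n i).2 * (n j).2 ≠ 0 := by
    intro i j hij h
    apply hdist i j hij
    have hi := hn i
    have hj := hn j
    have h1 : (n i).1 - (n j).1 = 0 := by
      have : ((n i).1 - (n j).1) ^ 2 = 0 := by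
        nlinarith [sq_nonneg ((n i).1 - (n j).1), sq_nonneg ((n i).2 - (n j).2)]
      exact pow_eq_zero_iff (two_ne_zero) |>.1 this
    have h2 : (n i).2 - (n j).2 = 0 := by
      have : ((n i).2 - (n j).2) ^ 2 = 0 := by
        nlinarith [sq_nonneg ((n i).1 - (n j).1), sq_nonneg ((n i).2 - (n j).2)]
      exact pow_eq_zero_iff (two_ne_zero) |>.1 this
    exact Prod.ext (by linarith) (by linarith)
  rw [Fintype.linearIndependent_iff]
  intro g hg
  have e0 := congrFun hg 0
  have e1 := congrFun hg 1
  have e2 := congrFun hg 2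
  simp [Fin.sum_univ_three] at e0 e1 e2
  have a0 := pos 0 1 (by decide)
  have b0 := pos 0 2 (by decide)
  have c0 := pos 1 2 (by decide)
  have h0 := hn 0
  have h1 := hn 1
  have h2 := hn 2
  generalize ha : 1 - (n 0).1 * (n 1).1 - (n 0).2 * (n 1).2 = a at a0
  generalize hb : 1 - (n 0).1 * (n 2).1 - (n 0).2 * (n 2).2 = b at b0
  generalize hc : 1 - (n 1).1 * (n 2).1 - (n 1).2 * (n 2).2 = c at c0
  have r0 : g 1 * a + g 2 * b = 0 := by
    rw [← ha, ← hb]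
    linear_combination e0 + (n 0).1 * e1 + (n 0).2 * e2 + g 0 * h0
  have r1 : g 0 * a + g 2 * c = 0 := by
    rw [← ha, ← hc]
    linear_combination e0 + (n 1).1 * e1 + (n 1).2 * e2 + g 1 * h1
  have r2 : g 0 * b + g 1 * c = 0 := by
    rw [← hb, ← hc]
    linear_combination e0 + (n 2).1 * e1 + (n 2).2 * e2 + g 2 * h2
  have z2 : g 2 = 0 := by
    have : g 2 * (b * c) = 0 := by
      linear_combination (b * r1 + c * r0 - a * r2) / 2
    exact (mul_eq_zero.1 this).resolve_right (mul_ne_zero b0 c0)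
  have z1 : g 1 = 0 := by
    rw [z2] at r0
    exact (mul_eq_zero.1 (by linarith : g 1 * a = 0)).resolve_right a0
  have z0 : g 0 = 0 := by
    rw [z2] at r1
    exact (mul_eq_zero.1 (by linarith : g 0 * a = 0)).resolve_right a0
  intro i
  fin_cases i
  · exact z0
  · exact z1
  · exact z2
end

section
/- Let c > 0, let n^(1), n^(2), n^(3) ∈ ℝ² be three pairwise distinct unit vectors and l_1, l_2, l_3 > 0. Then the matrix M := Σ_{i=1}^{3} l_i A^-_{n^(i)} is negative definite; in particular it is invertible. -/
open Matrix

/-- First system matrix of the 2D acoustic wave equation. -/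
noncomputable def acousticA1 (c : ℝ) : Matrix (Fin 3) (Fin 3) ℝ :=
  !![0, c, 0; c, 0, 0; 0, 0, 0]

/-- Second system matrix of the 2D acoustic wave equation. -/
noncomputable def acousticA2 (c : ℝ) : Matrix (Fin 3) (Fin 3) ℝ :=
  !![0, 0, c; 0, 0, 0; c, 0, 0]

/-- Negative part `A_n⁻ = -(c/2) w wᵀ` with `w = (1, -n₁, -n₂)ᵀ`. -/
noncomputable def fluxNeg (c n₁ n₂ : ℝ) : Matrix (Fin 3) (Fin 3) ℝ :=
  (-(c / 2)) • vecMulVec ![1, -n₁, -n₂] ![1, -n₁, -n₂]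

theorem aux_cross (a b a' b' x y : ℝ) (h : a ^ 2 + b ^ 2 = 1) (h' : a' ^ 2 + b' ^ 2 = 1)
    (hne : (a, b) ≠ (a', b')) (hd : (a - a') * x + (b - b') * y = 0) :
    (a + a') * y = (b + b') * x := by
  have h1 : (a - a') * ((a + a') * y - (b + b') * x) = 0 := by
    linear_combination y * (h - h') - (b + b') * hd
  have h2 : (b - b') * ((a + a') * y - (b + b') * x) = 0 := by
    linear_combination (-x) * (h - h') + (a + a') * hd
  by_contra hc
  have hc' : (a + a') * y - (b + b') * x ≠ 0 := sub_ne_zero.mpr hc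
  apply hne
  have e1 := (mul_eq_zero.mp h1).resolve_right hc'
  have e2 := (mul_eq_zero.mp h2).resolve_right hc'
  exact Prod.ext (sub_eq_zero.mp e1) (sub_eq_zero.mp e2)

theorem aux_zero (n : Fin 3 → ℝ × ℝ)
    (hn : ∀ i, (n i).1 ^ 2 + (n i).2 ^ 2 = 1)
    (hdist : ∀ i j, i ≠ j → n i ≠ n j) (z x y : ℝ)
    (h : ∀ i, z - (n i).1 * x - (n i).2 * y = 0) : z = 0 ∧ x = 0 ∧ y = 0 := by
  have k1 := aux_cross _ _ _ _ x y (hn 0) (hn 1) (hdist 0 1 (by decide))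
    (by linear_combination h 1 - h 0)
  have k2 := aux_cross _ _ _ _ x y (hn 0) (hn 2) (hdist 0 2 (by decide))
    (by linear_combination h 2 - h 0)
  have k3 : ((n 1).1 - (n 2).1) * x + ((n 1).2 - (n 2).2) * y = 0 := by
    linear_combination h 2 - h 1
  have e1 : ((n 1).1 - (n 2).1) * (x ^ 2 + y ^ 2) = 0 := by
    linear_combination x * k3 + y * (k1 - k2)
  have e2 : ((n 1).2 - (n 2).2) * (x ^ 2 + y ^ 2) = 0 := by
    linear_combination y * k3 - x * (k1 - k2)
  have hs : x ^ 2 + y ^ 2 = 0 := by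
    by_contra hc
    exact hdist 1 2 (by decide) (Prod.ext (sub_eq_zero.mp ((mul_eq_zero.mp e1).resolve_right hc))
      (sub_eq_zero.mp ((mul_eq_zero.mp e2).resolve_right hc)))
  have hx : x = 0 := by nlinarith [sq_nonneg x, sq_nonneg y]
  have hy : y = 0 := by nlinarith [sq_nonneg x, sq_nonneg y]
  have h0 := h 0
  subst hx hy
  exact ⟨by simpa using h0, rfl, rfl⟩

/-- For `c > 0`, three pairwise distinct unit normals `n⁽ⁱ⁾` and positive face
lengths `lᵢ`, the matrix `M = ∑ᵢ lᵢ A⁻_{n⁽ⁱ⁾}` is negative definite; in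
particular it is invertible. -/
theorem sum_fluxNeg_negDef (c : ℝ) (hc : 0 < c)
    (n : Fin 3 → ℝ × ℝ) (l : Fin 3 → ℝ)
    (hn : ∀ i, (n i).1 ^ 2 + (n i).2 ^ 2 = 1)
    (hdist : ∀ i j, i ≠ j → n i ≠ n j)
    (hl : ∀ i, 0 < l i) :
    (-(∑ i, l i • fluxNeg c (n i).1 (n i).2)).PosDef ∧
      IsUnit (∑ i, l i • fluxNeg c (n i).1 (n i).2) := by
  have hP : (-(∑ i, l i • fluxNeg c (n i).1 (n i).2)).PosDef := by
    refine Matrix.PosDef.of_dotProduct_mulVec_pos ?_ ?_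
    · ext i j
      fin_cases i <;> fin_cases j <;>
        simp [fluxNeg, Fin.sum_univ_three, vecMulVec_apply] <;> ring
    · intro v hv
      have key : star v ⬝ᵥ (-(∑ i, l i • fluxNeg c (n i).1 (n i).2)) *ᵥ v
          = ∑ i, l i * (c / 2) * (v 0 - (n i).1 * v 1 - (n i).2 * v 2) ^ 2 := by
        simp [fluxNeg, Fin.sum_univ_three, vecMulVec_apply, dotProduct, mulVec]
        ring
      rw [key]
      have hnn : ∀ i, 0 ≤ l i * (c / 2) * (v 0 - (n i).1 * v 1 - (n i).2 * v 2) ^ 2 :=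
        fun i => mul_nonneg (mul_nonneg (hl i).le (by positivity)) (sq_nonneg _)
      refine lt_of_le_of_ne (Finset.sum_nonneg fun i _ => hnn i) fun h0 => hv ?_
      have hz := (Finset.sum_eq_zero_iff_of_nonneg fun i _ => hnn i).mp h0.symm
      obtain ⟨z0, z1, z2⟩ := aux_zero n hn hdist (v 0) (v 1) (v 2) fun i => by
        have hp : l i * (c / 2) ≠ 0 := (mul_pos (hl i) (by positivity)).ne'
        exact pow_eq_zero_iff two_ne_zero |>.mp
          ((mul_eq_zero.mp (hz i (Finset.mem_univ i))).resolve_left hp)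
      ext i
      fin_cases i <;> simpa
  exact ⟨hP, by simpa using hP.isUnit⟩
end

section
/- Let c > 0, let n^(1), n^(2), n^(3) ∈ ℝ² be three pairwise distinct unit vectors and l_1, l_2, l_3 > 0 with l_1 n^(1) + l_2 n^(2) + l_3 n^(3) = 0, and set M := Σ_{j=1}^{3} l_j A^-_{n^(j)}. Then for each i ∈ {1,2,3}, the matrix ω_i := l_i A^-_{n^(i)} M^{-1} is the unique 3×3 real matrix satisfying the flux distribution condition Σ_{j=1}^{3} l_j · ω_i A^+_{n^(j)} = − l_i A^-_{n^(i)}. -/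
open Matrix

/-- Positive part `A_n⁺ = (c/2) v vᵀ` with `v = (1, n₁, n₂)ᵀ`. -/
noncomputable def fluxPos (c n₁ n₂ : ℝ) : Matrix (Fin 3) (Fin 3) ℝ :=
  (c / 2) • vecMulVec ![1, n₁, n₂] ![1, n₁, n₂]

lemma circ_aux (x0 y0 x1 y1 x2 y2 : ℝ) (h0 : x0^2+y0^2=1) (h1 : x1^2+y1^2=1) (h2 : x2^2+y2^2=1)
    (h01 : ¬ (x0 = x1 ∧ y0 = y1)) (h02 : ¬ (x0 = x2 ∧ y0 = y2)) (h12 : ¬ (x1 = x2 ∧ y1 = y2)) :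
    (x1-x0)*(y2-y0)-(y1-y0)*(x2-x0) ≠ 0 := by
  intro hD
  obtain ⟨a, ha⟩ : ∃ a, a = x1 - x0 := ⟨_, rfl⟩
  obtain ⟨b, hb⟩ : ∃ b, b = y1 - y0 := ⟨_, rfl⟩
  obtain ⟨p, hp⟩ : ∃ p, p = x2 - x0 := ⟨_, rfl⟩
  obtain ⟨q, hq⟩ : ∃ q, q = y2 - y0 := ⟨_, rfl⟩
  rw [← ha, ← hb, ← hp, ← hq] at hD
  have e1 : 2*(x0*a+y0*b) = -(a^2+b^2) := by subst ha hb; linear_combination h1 - h0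
  have e2 : 2*(x0*p+y0*q) = -(p^2+q^2) := by subst hp hq; linear_combination h2 - h0
  have na : a^2+b^2 ≠ 0 := by
    intro h
    exact h01 ⟨by nlinarith [sq_nonneg b, sq_nonneg a], by nlinarith [sq_nonneg b, sq_nonneg a]⟩
  have nb : p^2+q^2 ≠ 0 := by
    intro h
    exact h02 ⟨by nlinarith [sq_nonneg p, sq_nonneg q], by nlinarith [sq_nonneg p, sq_nonneg q]⟩
  have f1 : p^2+q^2 = a*p+b*q := by
    apply mul_left_cancel₀ na
    linear_combination (a^2+b^2) * e2 - (a*p+b*q)*e1 + 2*(x0*b-y0*a) * hD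
  have f2 : a^2+b^2 = a*p+b*q := by
    apply mul_left_cancel₀ nb
    linear_combination (p^2+q^2) * e1 - (a*p+b*q)*e2 - 2*(x0*q-y0*p) * hD
  have f3 : (x1-x2)^2+(y1-y2)^2 = 0 := by
    have : x1 - x2 = a - p := by linarith
    rw [this]
    have : y1 - y2 = b - q := by linarith
    rw [this]
    linear_combination f1 + f2
  exact h12 ⟨by nlinarith [sq_nonneg (x1-x2), sq_nonneg (y1-y2)], by nlinarith [sq_nonneg (x1-x2), sq_nonneg (y1-y2)]⟩

/-- For three pairwise distinct unit normals of a closed cell, the weighting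
matrix `ωᵢ = lᵢ A⁻_{n⁽ⁱ⁾} M⁻¹` with `M = ∑ⱼ lⱼ A⁻_{n⁽ʲ⁾}` is the unique
matrix satisfying the flux distribution condition
`∑ⱼ lⱼ ωᵢ A⁺_{n⁽ʲ⁾} = -lᵢ A⁻_{n⁽ⁱ⁾}`. -/
theorem weighting_matrix_unique (c : ℝ) (hc : 0 < c)
    (n : Fin 3 → ℝ × ℝ) (l : Fin 3 → ℝ)
    (hn : ∀ i, (n i).1 ^ 2 + (n i).2 ^ 2 = 1)
    (hdist : ∀ i j, i ≠ j → n i ≠ n j)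
    (hl : ∀ i, 0 < l i)
    (hclosed : ∑ i, l i • n i = 0) (i : Fin 3) :
    (fun ω : Matrix (Fin 3) (Fin 3) ℝ =>
        (∑ j, l j • (ω * fluxPos c (n j).1 (n j).2)) =
          -(l i • fluxNeg c (n i).1 (n i).2))
      ((l i • fluxNeg c (n i).1 (n i).2) *
        (∑ j, l j • fluxNeg c (n j).1 (n j).2)⁻¹) ∧
    ∀ ω : Matrix (Fin 3) (Fin 3) ℝ,
      (∑ j, l j • (ω * fluxPos c (n j).1 (n j).2)) =
          -(l i • fluxNeg c (n i).1 (n i).2) →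
        ω = (l i • fluxNeg c (n i).1 (n i).2) *
          (∑ j, l j • fluxNeg c (n j).1 (n j).2)⁻¹ := by
  have hx : l 0 * (n 0).1 + l 1 * (n 1).1 + l 2 * (n 2).1 = 0 := by
    have := congrArg Prod.fst hclosed
    simpa [Fin.sum_univ_three] using this
  have hy : l 0 * (n 0).2 + l 1 * (n 1).2 + l 2 * (n 2).2 = 0 := by
    have := congrArg Prod.snd hclosed
    simpa [Fin.sum_univ_three] using this
  have hD := circ_aux _ _ _ _ _ _ (hn 0) (hn 1) (hn 2)
    (fun h => hdist 0 1 (by decide) (Prod.ext h.1 h.2))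
    (fun h => hdist 0 2 (by decide) (Prod.ext h.1 h.2))
    (fun h => hdist 1 2 (by decide) (Prod.ext h.1 h.2))
  have hP : ∀ ω : Matrix (Fin 3) (Fin 3) ℝ, (∑ j, l j • (ω * fluxPos c (n j).1 (n j).2)) =
      -(ω * ∑ j, l j • fluxNeg c (n j).1 (n j).2) := by
    intro ω
    have : (∑ j, l j • fluxPos c (n j).1 (n j).2) = -∑ j, l j • fluxNeg c (n j).1 (n j).2 := by
      ext a b
      fin_cases a <;> fin_cases b <;>
        simp [Fin.sum_univ_three, fluxPos, fluxNeg, vecMulVec_apply] <;>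
        first
        | ring1
        | linear_combination c * hx
        | linear_combination c * hy
    simp_rw [← Matrix.mul_smul]
    rw [← Matrix.mul_sum, this, Matrix.mul_neg]
  have hdet : (∑ j, l j • fluxNeg c (n j).1 (n j).2).det ≠ 0 := by
    have : (∑ j, l j • fluxNeg c (n j).1 (n j).2).det = (-(c/2))^3 * (l 0 * l 1 * l 2) *
      (((n 1).1-(n 0).1)*((n 2).2-(n 0).2)-((n 1).2-(n 0).2)*((n 2).1-(n 0).1))^2 := by
      rw [Matrix.det_fin_three]
      simp [Fin.sum_univ_three, fluxNeg, vecMulVec_apply]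
      ring
    rw [this]
    have h0 := (hl 0).ne'
    have h1 := (hl 1).ne'
    have h2 := (hl 2).ne'
    have h3 : -(c/2) ≠ 0 := (show -(c/2) < 0 by linarith).ne
    exact mul_ne_zero (mul_ne_zero (pow_ne_zero _ h3) (mul_ne_zero (mul_ne_zero h0 h1) h2)) (pow_ne_zero _ hD)
  have hu := isUnit_iff_ne_zero.mpr hdet
  refine ⟨?_, ?_⟩
  · show _ = _
    rw [hP, Matrix.nonsing_inv_mul_cancel_right _ _ hu]
  · intro ω h
    rw [hP, neg_inj] at h
    rw [← h, Matrix.mul_nonsing_inv_cancel_right _ _ hu]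
end
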